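/- Let $B_1, B_2$ be centered Gaussian random vectors in $\mathbb{R}^n$ (values $B_k(t_1),\dots,B_k(t_n)$) such that $E[(B_1(t_i)-B_1(t_j))^2] \ge E[(B_2(t_i)-B_2(t_j))^2]$ for all $i \ne j$. Then $E[\max_{1\le i\le n} B_1(t_i)] \ge E[\max_{1\le i\le n} B_2(t_i)]$. -/

import Mathlib

open MeasureTheory ProbabilityTheory

lemma sf_stein_one (v : NNReal) (hv : v ≠ 0) (f f' : ℝ → ℝ) (hf : ∀ x, HasDerivAt f (f' x) x)
    (hf'c : Continuous f') (C C' : ℝ) (hC : ∀ x, |f x| ≤ C) (hC' : ∀ x, |f' x| ≤ C') :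
    ∫ x, x * f x ∂(gaussianReal 0 v) = v * ∫ x, f' x ∂(gaussianReal 0 v) := by
  have hfc : Continuous f := continuous_iff_continuousAt.2 fun x => (hf x).continuousAt
  have hv' : (v : ℝ) ≠ 0 := by exact_mod_cast hv
  rw [integral_gaussianReal_eq_integral_smul hv, integral_gaussianReal_eq_integral_smul hv]
  simp only [smul_eq_mul]
  have hpd : ∀ x, HasDerivAt (gaussianPDFReal 0 v) (-(x / v) * gaussianPDFReal 0 v x) x := by
    intro x
    simp only [gaussianPDFReal_def]
    have h1 : HasDerivAt (fun x : ℝ => -(x - 0) ^ 2 / (2 * (v:ℝ))) (-(x / v)) x := by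
      have := ((((hasDerivAt_id x).sub_const 0).pow 2).neg).div_const (2 * (v:ℝ))
      convert! this using 1
      simp; field_simp
    convert! (h1.exp.const_mul ((√(2 * Real.pi * v))⁻¹)) using 1
    ring
  have hpi := integrable_gaussianPDFReal 0 v
  have hxp : Integrable (fun x : ℝ => x * gaussianPDFReal 0 v x) := by
    have h1 : Integrable id (gaussianReal 0 v) :=
      memLp_one_iff_integrable.1 (memLp_id_gaussianReal' 1 (by simp))
    rw [gaussianReal_of_var_ne_zero _ hv, integrable_withDensity_iff_integrable_smul'
      (by fun_prop) (by simp [gaussianPDF])] at h1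
    refine h1.congr (Filter.Eventually.of_forall fun x => ?_)
    simp [gaussianPDF, gaussianPDFReal_nonneg, mul_comm]
  have key := integral_mul_deriv_eq_deriv_mul_of_integrable (u := f) (u' := f')
    (v := gaussianPDFReal 0 v) (v' := fun x => -(x / v) * gaussianPDFReal 0 v x)
    (fun x _ => hf x) (fun x _ => hpd x) ?_ ?_ ?_
  · have e1 : ∀ x, gaussianPDFReal 0 v x * (x * f x)
        = -(v:ℝ) * (f x * (-(x / v) * gaussianPDFReal 0 v x)) := by
      intro x; field_simp
    simp_rw [e1, integral_const_mul, key]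
    rw [neg_mul_neg]
    congr 1
    exact integral_congr_ae (Filter.Eventually.of_forall fun x => mul_comm _ _)
  · have := (hxp.bdd_mul (f := f) hfc.aestronglyMeasurable (c := C)
      (Filter.Eventually.of_forall hC)).const_mul (-(1/(v:ℝ)))
    refine this.congr (Filter.Eventually.of_forall fun x => ?_)
    simp; field_simp
  · exact hpi.bdd_mul (f := f') hf'c.aestronglyMeasurable (c := C')
      (Filter.Eventually.of_forall hC')
  · exact hpi.bdd_mul (f := f) hfc.aestronglyMeasurable (c := C)
      (Filter.Eventually.of_forall hC)

lemma sf_stein {Ω : Type*} [MeasurableSpace Ω] {P : Measure Ω} {n : ℕ}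
    (U : Ω → ℝ) (V : Ω → Fin n → ℝ)
    (h : HasGaussianLaw (fun ω => (U ω, V ω)) P) (hU : ∫ ω, U ω ∂P = 0)
    (g : (Fin n → ℝ) → ℝ) (g' : (Fin n → ℝ) → (Fin n → ℝ) →L[ℝ] ℝ)
    (hg : ∀ x, HasFDerivAt g (g' x) x) (hg'c : Continuous g') (C C' : ℝ)
    (hC : ∀ x, |g x| ≤ C) (hC' : ∀ x, ‖g' x‖ ≤ C') :
    ∫ ω, U ω * g (V ω) ∂P = ∫ ω, g' (V ω) (∫ ω, U ω • V ω ∂P) ∂P := by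
  have hP := h.isProbabilityMeasure
  have hgc : Continuous g := continuous_iff_continuousAt.2 fun x => (hg x).continuousAt
  have hUg := h.fst
  have hVg := h.snd
  have hU2 := hUg.memLp_two
  have hV2 := hVg.memLp_two
  have hUV : Integrable (fun ω => U ω • V ω) P :=
    memLp_one_iff_integrable.1 (MemLp.smul (r := 1) hV2 hU2)
  set c := ∫ ω, U ω • V ω ∂P with hc
  have hmap := hUg.map_eq_gaussianReal
  rw [hU] at hmap
  set v := Var[U; P].toNNReal with hvdef
  have hvar : Var[U; P] = v := (Real.coe_toNNReal _ (variance_nonneg _ _)).symm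
  by_cases hv : v = 0
  · have hU0 : U =ᵐ[P] 0 := by
      have := ae_eq_integral_of_variance_eq_zero hU2 (by simp [hvar, hv])
      filter_upwards [this] with ω hω
      simp [hω, hU]
    have hc0 : c = 0 := by
      rw [hc, integral_eq_zero_of_ae]
      filter_upwards [hU0] with ω hω
      simp [hω]
    rw [hc0, integral_eq_zero_of_ae]
    · simp
    · filter_upwards [hU0] with ω hω
      simp [hω]
  have hv' : (v : ℝ) ≠ 0 := by exact_mod_cast hv
  let d : Fin n → ℝ := (v:ℝ)⁻¹ • c
  let W : Ω → Fin n → ℝ := fun ω => V ω - U ω • d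
  have hUW : HasGaussianLaw (fun ω => (U ω, W ω)) P := by
    have := h.map_fun ((ContinuousLinearMap.fst ℝ ℝ (Fin n → ℝ)).prod
      (ContinuousLinearMap.snd ℝ ℝ (Fin n → ℝ) -
        (ContinuousLinearMap.fst ℝ ℝ (Fin n → ℝ)).smulRight d))
    exact this
  have hind : IndepFun U W P := by
    refine hUW.indepFun_of_covariance_strongDual fun L₁ L₂ => ?_
    have hL1 : L₁ ∘ U = fun ω => L₁ 1 * U ω := by
      ext ω
      have := L₁.map_smul (U ω) 1
      simp only [smul_eq_mul, mul_one] at this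
      simp [this, mul_comm]
    rw [hL1, covariance_const_mul_left]
    have hLV : MemLp (fun ω => L₂ (V ω)) 2 P := (hVg.map_fun L₂).memLp_two
    have hL2 : L₂ ∘ W = fun ω => L₂ (V ω) - L₂ d * U ω := by
      ext ω; simp [W, mul_comm]
    have hcov : cov[U, fun ω => L₂ (V ω); P] = L₂ c := by
      rw [covariance_eq_sub hU2 hLV, hU, zero_mul, sub_zero, hc, ← L₂.integral_comp_comm hUV]
      simp
    have hcov2 : cov[U, L₂ ∘ W; P] = 0 := by
      rw [hL2, covariance_fun_sub_right hU2 hLV (hU2.const_mul _), hcov,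
        covariance_const_mul_right, covariance_self hU2.aemeasurable, hvar]
      simp [d]; field_simp; simp
    rw [hcov2, mul_zero]
  have hWm : AEMeasurable W P := hUW.snd.aemeasurable
  have hUm : AEMeasurable U P := hU2.aemeasurable
  have hprod := (indepFun_iff_map_prod_eq_prod_map_map hUm hWm).1 hind
  rw [hmap] at hprod
  have hV : ∀ ω, V ω = W ω + U ω • d := fun ω => by simp [W]
  have hPW : IsProbabilityMeasure (P.map W) := Measure.isProbabilityMeasure_map hWm
  have hint1 : Integrable (fun p : ℝ × (Fin n → ℝ) => p.1 * g (p.2 + p.1 • d))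
      ((gaussianReal 0 v).prod (P.map W)) := by
    rw [← hprod, integrable_map_measure
      (Continuous.aestronglyMeasurable (by fun_prop)) (hUm.prodMk hWm)]
    have hUi : Integrable U P := hU2.integrable (by simp)
    refine (hUi.mul_bdd (c := C) (g := fun ω => g (V ω))
      (hgc.comp_aestronglyMeasurable hV2.1) (Filter.Eventually.of_forall fun ω => hC _)).congr ?_
    exact Filter.Eventually.of_forall fun ω => by simp [hV]
  have hint2 : Integrable (fun p : ℝ × (Fin n → ℝ) => g' (p.2 + p.1 • d) d)
      ((gaussianReal 0 v).prod (P.map W)) := by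
    refine Integrable.of_bound (Continuous.aestronglyMeasurable (by fun_prop)) (C' * ‖d‖)
      (Filter.Eventually.of_forall fun p => ?_)
    exact ((g' _).le_opNorm _).trans (by gcongr; exact hC' _)
  have e1 : ∫ ω, U ω * g (V ω) ∂P
      = ∫ p : ℝ × (Fin n → ℝ), p.1 * g (p.2 + p.1 • d) ∂((gaussianReal 0 v).prod (P.map W)) := by
    rw [← hprod, integral_map (hUm.prodMk hWm) (Continuous.aestronglyMeasurable (by fun_prop))]
    simp [← hV]
  have e2 : ∫ ω, g' (V ω) c ∂P = v *
      ∫ p : ℝ × (Fin n → ℝ), g' (p.2 + p.1 • d) d ∂((gaussianReal 0 v).prod (P.map W)) := by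
    rw [← hprod, integral_map (hUm.prodMk hWm) (Continuous.aestronglyMeasurable (by fun_prop)),
      ← integral_const_mul]
    refine integral_congr_ae (Filter.Eventually.of_forall fun ω => ?_)
    simp only [← hV, d]
    simp; field_simp
  rw [e1, e2, integral_prod_symm _ hint1, integral_prod_symm _ hint2, ← integral_const_mul]
  refine integral_congr_ae (Filter.Eventually.of_forall fun w => ?_)
  refine sf_stein_one v hv (fun u => g (w + u • d)) (fun u => g' (w + u • d) d) ?_ ?_ C (C' * ‖d‖)
    (fun u => hC _) (fun u => ?_)
  · intro u
    have h1 : HasDerivAt (fun u : ℝ => w + u • d) d u := by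
      simpa using ((hasDerivAt_id u).smul_const d).const_add w
    exact (hg (w + u • d)).comp_hasDerivAt u h1
  · fun_prop
  · exact ((g' _).le_opNorm _).trans (by gcongr; exact hC' _)

noncomputable def sfLse {n : ℕ} (x : Fin n → ℝ) : ℝ := Real.log (∑ j, Real.exp (x j))

noncomputable def sfP {n : ℕ} (i : Fin n) (x : Fin n → ℝ) : ℝ :=
  Real.exp (x i) / ∑ j, Real.exp (x j)

noncomputable def sfP' {n : ℕ} (i : Fin n) (x : Fin n → ℝ) : (Fin n → ℝ) →L[ℝ] ℝ :=
  sfP i x • ((ContinuousLinearMap.proj i : (Fin n → ℝ) →L[ℝ] ℝ) - ∑ j, sfP j x • ContinuousLinearMap.proj j)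

lemma sf_S_pos {n : ℕ} (hn : 0 < n) (x : Fin n → ℝ) : 0 < ∑ j, Real.exp (x j) := by
  have : Nonempty (Fin n) := ⟨⟨0, hn⟩⟩
  exact Finset.sum_pos (fun i _ => Real.exp_pos _) Finset.univ_nonempty

lemma sfP_nonneg {n : ℕ} (i : Fin n) (x : Fin n → ℝ) : 0 ≤ sfP i x := by
  unfold sfP; positivity

lemma sfP_sum {n : ℕ} (hn : 0 < n) (x : Fin n → ℝ) : ∑ i, sfP i x = 1 := by
  unfold sfP
  rw [← Finset.sum_div, div_self (sf_S_pos hn x).ne']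

lemma sfP_le_one {n : ℕ} (hn : 0 < n) (i : Fin n) (x : Fin n → ℝ) : sfP i x ≤ 1 := by
  rw [← sfP_sum hn x]
  exact Finset.single_le_sum (f := fun i => sfP i x) (fun i _ => sfP_nonneg i x)
    (Finset.mem_univ i)

lemma sf_S_deriv {n : ℕ} (x : Fin n → ℝ) :
    HasFDerivAt (fun x : Fin n → ℝ => ∑ j, Real.exp (x j))
      (∑ j, Real.exp (x j) • (ContinuousLinearMap.proj j : (Fin n → ℝ) →L[ℝ] ℝ)) x := by
  refine HasFDerivAt.fun_sum fun j _ => ?_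
  exact (hasFDerivAt_apply (𝕜 := ℝ) j x).exp

lemma sfLse_deriv {n : ℕ} (hn : 0 < n) (x : Fin n → ℝ) :
    HasFDerivAt sfLse (∑ j, sfP j x • (ContinuousLinearMap.proj j : (Fin n → ℝ) →L[ℝ] ℝ)) x := by
  have := (sf_S_deriv x).log (sf_S_pos hn x).ne'
  convert! this using 1
  simp only [Finset.smul_sum, smul_smul, sfP]
  refine Finset.sum_congr rfl fun j _ => ?_
  congr 1; ring

lemma sfP_deriv {n : ℕ} (hn : 0 < n) (i : Fin n) (x : Fin n → ℝ) :
    HasFDerivAt (sfP i) (sfP' i x) x := by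
  have e : ∀ y : Fin n → ℝ, sfP i y = Real.exp (y i - sfLse y) := fun y => by
    rw [Real.exp_sub, sfLse, Real.exp_log (sf_S_pos hn y), sfP]
  have h1 := ((hasFDerivAt_apply (𝕜 := ℝ) i x).sub (sfLse_deriv hn x)).exp
  rw [show sfP i = fun y => Real.exp (y i - sfLse y) from funext e]
  convert! h1 using 1
  simp [sfP', e]

lemma sfP_cont {n : ℕ} (hn : 0 < n) (i : Fin n) : Continuous (sfP (n := n) i) :=
  continuous_iff_continuousAt.2 fun x => (sfP_deriv hn i x).continuousAt

lemma sfLse_cont {n : ℕ} (hn : 0 < n) : Continuous (sfLse (n := n)) :=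
  continuous_iff_continuousAt.2 fun x => (sfLse_deriv hn x).continuousAt

lemma sfP'_cont {n : ℕ} (hn : 0 < n) (i : Fin n) : Continuous (sfP' (n := n) i) := by
  have := fun j => sfP_cont hn j
  unfold sfP'
  fun_prop

lemma sfP'_apply {n : ℕ} (i : Fin n) (x h : Fin n → ℝ) :
    sfP' i x h = sfP i x * (h i - ∑ j, sfP j x * h j) := by
  simp [sfP']

lemma sf_avg_le {n : ℕ} (hn : 0 < n) (x h : Fin n → ℝ) :
    |∑ j, sfP j x * h j| ≤ ‖h‖ := by
  calc |∑ j, sfP j x * h j| ≤ ∑ j, |sfP j x * h j| := Finset.abs_sum_le_sum_abs _ _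
    _ ≤ ∑ j, sfP j x * ‖h‖ := by
        refine Finset.sum_le_sum fun j _ => ?_
        rw [abs_mul, abs_of_nonneg (sfP_nonneg j x)]
        exact mul_le_mul_of_nonneg_left (norm_le_pi_norm h j) (sfP_nonneg j x)
    _ = ‖h‖ := by rw [← Finset.sum_mul, sfP_sum hn, one_mul]

lemma sfP'_bound {n : ℕ} (hn : 0 < n) (i : Fin n) (x : Fin n → ℝ) : ‖sfP' i x‖ ≤ 2 := by
  refine ContinuousLinearMap.opNorm_le_bound _ (by norm_num) fun h => ?_
  rw [sfP'_apply, norm_mul, Real.norm_eq_abs, Real.norm_eq_abs, abs_of_nonneg (sfP_nonneg i x)]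
  have h1 : |h i - ∑ j, sfP j x * h j| ≤ 2 * ‖h‖ := by
    have a1 := abs_sub (h i) (∑ j, sfP j x * h j)
    have a2 : |h i| ≤ ‖h‖ := norm_le_pi_norm h i
    have a3 := sf_avg_le hn x h
    linarith
  calc _ ≤ 1 * (2 * ‖h‖) := by
        gcongr
        exact sfP_le_one hn i x
    _ = _ := one_mul _

lemma sfLse_ge {n : ℕ} (x : Fin n → ℝ) (i : Fin n) : x i ≤ sfLse x := by
  unfold sfLse
  rw [← Real.log_exp (x i)]
  apply Real.log_le_log (Real.exp_pos _)
  exact Finset.single_le_sum (f := fun i => Real.exp (x i)) (fun i _ => (Real.exp_pos _).le)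
    (Finset.mem_univ i)

lemma sfLse_le {n : ℕ} (hn : 0 < n) (x : Fin n → ℝ) (M : ℝ) (hM : ∀ i, x i ≤ M) :
    sfLse x ≤ M + Real.log n := by
  unfold sfLse
  have : ∑ j, Real.exp (x j) ≤ n * Real.exp M := by
    calc _ ≤ ∑ j : Fin n, Real.exp M := Finset.sum_le_sum fun j _ => Real.exp_le_exp.2 (hM j)
      _ = _ := by simp
  have hn' : (0:ℝ) < n := by exact_mod_cast hn
  calc _ ≤ Real.log (n * Real.exp M) := Real.log_le_log (sf_S_pos hn x) this
    _ = _ := by rw [Real.log_mul hn'.ne' (Real.exp_pos _).ne', Real.log_exp, add_comm]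

lemma sfLse_abs {n : ℕ} (hn : 0 < n) (x : Fin n → ℝ) : |sfLse x| ≤ ‖x‖ + Real.log n := by
  have hl : 0 ≤ Real.log n := Real.log_natCast_nonneg n
  rw [abs_le]
  have h0 := fun i => abs_le.1 (norm_le_pi_norm x i)
  constructor
  · have := sfLse_ge x ⟨0, hn⟩
    linarith [(h0 ⟨0, hn⟩).1]
  · exact sfLse_le hn x _ fun i => (h0 i).2

lemma sf_alg {n : ℕ} (p : Fin n → ℝ) (hp : ∀ i, 0 ≤ p i) (hs : ∑ i, p i = 1)
    (D : Fin n → Fin n → ℝ) (hD : ∀ i j, D i i + D j j - D i j - D j i ≤ 0) :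
    ∑ i, p i * (D i i - ∑ j, p j * D i j) ≤ 0 := by
  have h0 : ∑ i, ∑ j, p i * p j * (D i i + D j j - D i j - D j i) ≤ 0 :=
    Finset.sum_nonpos fun i _ => Finset.sum_nonpos fun j _ =>
      mul_nonpos_of_nonneg_of_nonpos (mul_nonneg (hp i) (hp j)) (hD i j)
  have e1 : ∑ i, ∑ j, p i * p j * D i i = ∑ i, p i * D i i := by
    refine Finset.sum_congr rfl fun i _ => ?_
    rw [← mul_one (p i * D i i), ← hs, Finset.mul_sum]
    exact Finset.sum_congr rfl fun j _ => by ring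
  have e2 : ∑ i, ∑ j, p i * p j * D j j = ∑ i, p i * D i i := by
    rw [Finset.sum_comm, ← e1]
    exact Finset.sum_congr rfl fun i _ => Finset.sum_congr rfl fun j _ => by ring
  have e3 : ∑ i, ∑ j, p i * p j * D j i = ∑ i, ∑ j, p i * p j * D i j := by
    rw [Finset.sum_comm]
    exact Finset.sum_congr rfl fun i _ => Finset.sum_congr rfl fun j _ => by ring
  have e4 : ∑ i, p i * (D i i - ∑ j, p j * D i j)
      = ∑ i, p i * D i i - ∑ i, ∑ j, p i * p j * D i j := by
    simp only [mul_sub, Finset.sum_sub_distrib, Finset.mul_sum, mul_assoc]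
  simp only [mul_add, mul_sub, Finset.sum_add_distrib, Finset.sum_sub_distrib] at h0
  rw [e1, e2, e3] at h0
  linarith

lemma sf_main {n : ℕ} (hn : 0 < n) (ν₁ ν₂ : Measure (Fin n → ℝ)) [IsGaussian ν₁] [IsGaussian ν₂]
    (h₁ : ∀ i, ∫ x, x i ∂ν₁ = 0) (h₂ : ∀ i, ∫ x, x i ∂ν₂ = 0)
    (hcomp : ∀ i j, ∫ x, (x i - x j) ^ 2 ∂ν₂ ≤ ∫ x, (x i - x j) ^ 2 ∂ν₁) :
    ∫ x, sfLse x ∂ν₂ ≤ ∫ x, sfLse x ∂ν₁ := by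
  let P : Measure ((Fin n → ℝ) × (Fin n → ℝ)) := ν₁.prod ν₂
  have hPg : IsGaussian P := by infer_instance
  let Z : ℝ → (Fin n → ℝ) × (Fin n → ℝ) → (Fin n → ℝ) := fun θ ω => Real.cos θ • ω.1 + Real.sin θ • ω.2
  let Z' : ℝ → (Fin n → ℝ) × (Fin n → ℝ) → (Fin n → ℝ) := fun θ ω => -Real.sin θ • ω.1 + Real.cos θ • ω.2
  have hPc := fun j => sfP_cont hn j
  have hlc := sfLse_cont hn
  have hnorm : Integrable (fun ω : (Fin n → ℝ) × (Fin n → ℝ) => ‖ω‖) P := (IsGaussian.integrable_id (μ := P)).norm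
  have hZb : ∀ θ ω, ‖Z θ ω‖ ≤ 2 * ‖ω‖ := by
    intro θ ω
    calc _ ≤ ‖Real.cos θ • ω.1‖ + ‖Real.sin θ • ω.2‖ := norm_add_le _ _
      _ ≤ 1 * ‖ω‖ + 1 * ‖ω‖ := by
        rw [norm_smul, norm_smul]
        gcongr
        · exact Real.abs_cos_le_one θ
        · exact norm_fst_le ω
        · exact Real.abs_sin_le_one θ
        · exact norm_snd_le ω
      _ = _ := by ring
  have hZ'b : ∀ θ ω, ‖Z' θ ω‖ ≤ 2 * ‖ω‖ := by
    intro θ ω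
    calc _ ≤ ‖-Real.sin θ • ω.1‖ + ‖Real.cos θ • ω.2‖ := norm_add_le _ _
      _ ≤ 1 * ‖ω‖ + 1 * ‖ω‖ := by
        rw [norm_smul, norm_smul, norm_neg]
        gcongr
        · exact Real.abs_sin_le_one θ
        · exact norm_fst_le ω
        · exact Real.abs_cos_le_one θ
        · exact norm_snd_le ω
      _ = _ := by ring
  have hZd : ∀ θ ω, HasDerivAt (fun θ => Z θ ω) (Z' θ ω) θ := fun θ ω =>
    ((Real.hasDerivAt_cos θ).smul_const ω.1).add ((Real.hasDerivAt_sin θ).smul_const ω.2)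
  have hder : ∀ θ, HasDerivAt (fun θ => ∫ ω, sfLse (Z θ ω) ∂P)
      (∫ ω, ∑ j, sfP j (Z θ ω) * Z' θ ω j ∂P) θ := by
    intro θ
    refine (hasDerivAt_integral_of_dominated_loc_of_deriv_le (s := Set.univ)
      (bound := fun ω => 2 * ‖ω‖) (F' := fun θ ω => ∑ j, sfP j (Z θ ω) * Z' θ ω j)
      Filter.univ_mem ?_ ?_ ?_ ?_ (hnorm.const_mul 2) ?_).2
    · exact Filter.Eventually.of_forall fun θ =>
        Continuous.aestronglyMeasurable (by fun_prop)
    · refine ((hnorm.const_mul 2).add (integrable_const (Real.log n))).mono'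
        (Continuous.aestronglyMeasurable (by fun_prop)) (Filter.Eventually.of_forall fun ω => ?_)
      have := sfLse_abs hn (Z θ ω)
      have := hZb θ ω
      simp only [Real.norm_eq_abs, Pi.add_apply]
      linarith
    · exact Continuous.aestronglyMeasurable (by fun_prop)
    · exact Filter.Eventually.of_forall fun ω θ _ => (sf_avg_le hn _ _).trans (hZ'b θ ω)
    · refine Filter.Eventually.of_forall fun ω θ _ => ?_
      have := (sfLse_deriv hn (Z θ ω)).comp_hasDerivAt θ (hZd θ ω)
      simpa using! this
  -- second moments
  have hx2 : ∀ i, MemLp (fun ω : (Fin n → ℝ) × (Fin n → ℝ) => ω.1 i) 2 P := fun i =>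
    IsGaussian.memLp_dual P ((ContinuousLinearMap.proj i).comp
      (ContinuousLinearMap.fst ℝ (Fin n → ℝ) (Fin n → ℝ))) 2 (by simp)
  have hy2 : ∀ i, MemLp (fun ω : (Fin n → ℝ) × (Fin n → ℝ) => ω.2 i) 2 P := fun i =>
    IsGaussian.memLp_dual P ((ContinuousLinearMap.proj i).comp
      (ContinuousLinearMap.snd ℝ (Fin n → ℝ) (Fin n → ℝ))) 2 (by simp)
  have hK1 : ∀ i, MemLp (fun x : (Fin n → ℝ) => x i) 2 ν₁ := fun i =>
    IsGaussian.memLp_dual ν₁ (ContinuousLinearMap.proj i) 2 (by simp)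
  have hK2 : ∀ i, MemLp (fun x : (Fin n → ℝ) => x i) 2 ν₂ := fun i =>
    IsGaussian.memLp_dual ν₂ (ContinuousLinearMap.proj i) 2 (by simp)
  let D : Fin n → Fin n → ℝ := fun i j => ∫ x, x i * x j ∂ν₂ - ∫ x, x i * x j ∂ν₁
  have hD : ∀ i j, D i i + D j j - D i j - D j i ≤ 0 := by
    intro i j
    have key : ∀ ν : Measure (Fin n → ℝ), (∀ i, MemLp (fun x : (Fin n → ℝ) => x i) 2 ν) →
        ∫ x, (x i - x j) ^ 2 ∂ν = ∫ x, x i * x i ∂ν + ∫ x, x j * x j ∂ν - ∫ x, x i * x j ∂ν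
          - ∫ x, x j * x i ∂ν := by
      intro ν hν
      have hI : ∀ i j, Integrable (fun x : (Fin n → ℝ) => x i * x j) ν := fun i j =>
        (hν i).integrable_mul (hν j)
      have hA : Integrable (fun x : (Fin n → ℝ) => x i * x i + x j * x j) ν :=
        (hI i i).add (hI j j)
      have hB : Integrable (fun x : (Fin n → ℝ) => x i * x i + x j * x j - x i * x j) ν :=
        hA.sub (hI i j)
      rw [← integral_add (hI _ _) (hI _ _), ← integral_sub hA (hI _ _),
        ← integral_sub hB (hI _ _)]
      exact integral_congr_ae (Filter.Eventually.of_forall fun x => by simp; ring)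
    have := hcomp i j
    rw [key ν₁ hK1, key ν₂ hK2] at this
    simp only [D]
    linarith
  have hcov : ∀ θ i j, ∫ ω, Z' θ ω i * Z θ ω j ∂P = Real.sin θ * Real.cos θ * D i j := by
    intro θ i j
    have exx : ∫ ω : (Fin n → ℝ) × (Fin n → ℝ), ω.1 i * ω.1 j ∂P = ∫ x, x i * x j ∂ν₁ := by
      have := integral_fun_fst (μ := ν₁) (ν := ν₂) (fun x : (Fin n → ℝ) => x i * x j)
      simpa using this
    have eyy : ∫ ω : (Fin n → ℝ) × (Fin n → ℝ), ω.2 i * ω.2 j ∂P = ∫ x, x i * x j ∂ν₂ := by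
      have := integral_fun_snd (μ := ν₁) (ν := ν₂) (fun x : (Fin n → ℝ) => x i * x j)
      simpa using this
    have exy : ∀ i j, ∫ ω : (Fin n → ℝ) × (Fin n → ℝ), ω.1 i * ω.2 j ∂P = 0 := fun i j => by
      have := integral_prod_mul (μ := ν₁) (ν := ν₂) (fun x : (Fin n → ℝ) => x i) (fun x : (Fin n → ℝ) => x j)
      rw [h₁, zero_mul] at this
      exact this
    have i1 : Integrable (fun ω : (Fin n → ℝ) × (Fin n → ℝ) => ω.1 i * ω.1 j) P := (hx2 i).integrable_mul (hx2 j)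
    have i2 : Integrable (fun ω : (Fin n → ℝ) × (Fin n → ℝ) => ω.2 i * ω.2 j) P := (hy2 i).integrable_mul (hy2 j)
    have i3 : Integrable (fun ω : (Fin n → ℝ) × (Fin n → ℝ) => ω.1 i * ω.2 j) P := (hx2 i).integrable_mul (hy2 j)
    have i4 : Integrable (fun ω : (Fin n → ℝ) × (Fin n → ℝ) => ω.1 j * ω.2 i) P := (hx2 j).integrable_mul (hy2 i)
    have e : ∀ ω : (Fin n → ℝ) × (Fin n → ℝ), Z' θ ω i * Z θ ω j =
        -(Real.sin θ * Real.cos θ) * (ω.1 i * ω.1 j) + Real.sin θ * Real.cos θ * (ω.2 i * ω.2 j)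
        + -(Real.sin θ * Real.sin θ) * (ω.1 i * ω.2 j)
        + Real.cos θ * Real.cos θ * (ω.1 j * ω.2 i) := by
      intro ω; simp [Z, Z']; ring
    simp_rw [e]
    have j1 := i1.const_mul (-(Real.sin θ * Real.cos θ))
    have j2 := i2.const_mul (Real.sin θ * Real.cos θ)
    have j3 := i3.const_mul (-(Real.sin θ * Real.sin θ))
    have j4 := i4.const_mul (Real.cos θ * Real.cos θ)
    rw [integral_add (by exact (j1.add j2).add j3) j4, integral_add (by exact j1.add j2) j3,
      integral_add j1 j2]
    simp only [integral_const_mul, exx, eyy, exy, D]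
    ring
  have hneg : ∀ θ, 0 ≤ Real.sin θ * Real.cos θ →
      ∫ ω, ∑ j, sfP j (Z θ ω) * Z' θ ω j ∂P ≤ 0 := by
    intro θ hθ
    have hgl : ∀ i, HasGaussianLaw (fun ω => (Z' θ ω i, Z θ ω)) P := by
      intro i
      have h0 : HasGaussianLaw id P := IsGaussian.hasGaussianLaw_id
      exact h0.map_fun (((ContinuousLinearMap.proj i).comp
        (-Real.sin θ • ContinuousLinearMap.fst ℝ (Fin n → ℝ) (Fin n → ℝ) + Real.cos θ • ContinuousLinearMap.snd ℝ (Fin n → ℝ) (Fin n → ℝ))).prod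
        (Real.cos θ • ContinuousLinearMap.fst ℝ (Fin n → ℝ) (Fin n → ℝ) + Real.sin θ • ContinuousLinearMap.snd ℝ (Fin n → ℝ) (Fin n → ℝ)))
    have hZ2 : ∀ i, MemLp (fun ω => Z' θ ω i) 2 P := fun i => (hgl i).fst.memLp_two
    have hZZ : ∀ i, Integrable (fun ω => Z' θ ω i • Z θ ω) P := fun i =>
      memLp_one_iff_integrable.1 (MemLp.smul (r := 1) (hgl i).snd.memLp_two (hZ2 i))
    have hmean : ∀ i, ∫ ω, Z' θ ω i ∂P = 0 := by
      intro i
      have ex : ∫ ω : (Fin n → ℝ) × (Fin n → ℝ), ω.1 i ∂P = 0 := by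
        have := integral_fun_fst (μ := ν₁) (ν := ν₂) (fun x : (Fin n → ℝ) => x i)
        simpa [h₁] using this
      have ey : ∫ ω : (Fin n → ℝ) × (Fin n → ℝ), ω.2 i ∂P = 0 := by
        have := integral_fun_snd (μ := ν₁) (ν := ν₂) (fun x : (Fin n → ℝ) => x i)
        simpa [h₂] using this
      simp only [Z', Pi.add_apply, Pi.smul_apply, smul_eq_mul]
      rw [integral_add (((hx2 i).integrable (by simp)).const_mul _)
        (((hy2 i).integrable (by simp)).const_mul _), integral_const_mul, integral_const_mul,
        ex, ey]
      simp
    have hst : ∀ i, ∫ ω, sfP i (Z θ ω) * Z' θ ω i ∂P = ∫ ω, sfP i (Z θ ω) *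
        (Real.sin θ * Real.cos θ * D i i
          - ∑ j, sfP j (Z θ ω) * (Real.sin θ * Real.cos θ * D i j)) ∂P := by
      intro i
      have := sf_stein (fun ω => Z' θ ω i) (Z θ) (hgl i) (hmean i) (sfP i) (sfP' i)
        (sfP_deriv hn i) (sfP'_cont hn i) 1 2
        (fun x => by rw [abs_of_nonneg (sfP_nonneg i x)]; exact sfP_le_one hn i x)
        (sfP'_bound hn i)
      have hcj : ∀ j, (∫ ω, Z' θ ω i • Z θ ω ∂P) j = Real.sin θ * Real.cos θ * D i j := by
        intro j
        rw [← hcov]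
        exact ((ContinuousLinearMap.proj (R := ℝ) (φ := fun _ : Fin n => ℝ) j).integral_comp_comm
          (hZZ i)).symm
      simp only [sfP'_apply, hcj] at this
      rw [← this]
      exact integral_congr_ae (Filter.Eventually.of_forall fun ω => mul_comm _ _)
    have hb : ∀ (i) (ω : (Fin n → ℝ) × (Fin n → ℝ)), ‖sfP i (Z θ ω)‖ ≤ 1 := fun i ω => by
      rw [Real.norm_eq_abs, abs_of_nonneg (sfP_nonneg _ _)]; exact sfP_le_one hn _ _
    have hZc : Continuous (Z θ) := by fun_prop
    rw [integral_finsetSum _ fun i _ => ((hZ2 i).integrable (by simp)).bdd_mul (c := 1)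
      (Continuous.aestronglyMeasurable (by fun_prop)) (Filter.Eventually.of_forall (hb i))]
    simp_rw [hst]
    rw [← integral_finsetSum]
    · refine integral_nonpos fun ω => ?_
      refine sf_alg (fun i => sfP i (Z θ ω)) (fun i => sfP_nonneg _ _) (sfP_sum hn _)
        (fun i j => Real.sin θ * Real.cos θ * D i j) fun i j => ?_
      have := mul_nonpos_of_nonneg_of_nonpos hθ (hD i j)
      linarith
    · intro i _
      refine Integrable.bdd_mul (c := 1) ?_ (Continuous.aestronglyMeasurable (by fun_prop))
        (Filter.Eventually.of_forall (hb i))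
      refine (integrable_const _).sub (integrable_finsetSum _ fun j _ => ?_)
      exact (integrable_const _).bdd_mul (c := 1)
        (Continuous.aestronglyMeasurable (by fun_prop)) (Filter.Eventually.of_forall (hb j))
  have hanti : AntitoneOn (fun θ => ∫ ω, sfLse (Z θ ω) ∂P) (Set.Icc 0 (Real.pi / 2)) := by
    refine antitoneOn_of_deriv_nonpos (convex_Icc _ _)
      (fun θ _ => (hder θ).continuousAt.continuousWithinAt)
      (fun θ _ => (hder θ).differentiableAt.differentiableWithinAt) fun θ hθ => ?_
    rw [(hder θ).deriv]
    rw [interior_Icc] at hθ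
    refine hneg θ (mul_nonneg ?_ ?_)
    · exact Real.sin_nonneg_of_nonneg_of_le_pi hθ.1.le (by linarith [hθ.2, Real.pi_pos])
    · exact Real.cos_nonneg_of_neg_pi_div_two_le_of_le (by linarith [hθ.1, Real.pi_pos]) hθ.2.le
  have hpi := Real.pi_pos
  have := hanti (Set.left_mem_Icc.2 (by positivity)) (Set.right_mem_Icc.2 (by positivity))
    (by positivity : (0:ℝ) ≤ Real.pi / 2)
  have f1 : ∫ ω, sfLse (Z 0 ω) ∂P = ∫ x, sfLse x ∂ν₁ := by
    have := integral_fun_fst (μ := ν₁) (ν := ν₂) (fun x : (Fin n → ℝ) => sfLse x)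
    simpa [Z] using this
  have f2 : ∫ ω, sfLse (Z (Real.pi / 2) ω) ∂P = ∫ x, sfLse x ∂ν₂ := by
    have := integral_fun_snd (μ := ν₁) (ν := ν₂) (fun x : (Fin n → ℝ) => sfLse x)
    simpa [Z] using this
  simp only [f1, f2] at this
  exact this

lemma sf_gauss {Ω : Type*} [MeasurableSpace Ω] (μ : Measure Ω)
    {n : ℕ} (B : Ω → Fin n → ℝ) (hmeas : Measurable B)
    (hgauss : ∀ a : Fin n → ℝ, ∃ v : NNReal,
      Measure.map (fun ω => ∑ i, a i * B ω i) μ = gaussianReal 0 v) :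
    IsGaussian (μ.map B) ∧ ∀ i, ∫ x, x i ∂(μ.map B) = 0 := by
  have key : ∀ L : (Fin n → ℝ) →L[ℝ] ℝ, ∃ v : NNReal, (μ.map B).map L = gaussianReal 0 v := by
    intro L
    obtain ⟨v, hv⟩ := hgauss fun i => L (Pi.single i 1)
    refine ⟨v, ?_⟩
    rw [Measure.map_map (by fun_prop) hmeas, ← hv]
    congr 1
    ext ω
    simp only [Function.comp]
    conv_lhs => rw [pi_eq_sum_univ' (B ω)]
    rw [map_sum]
    refine Finset.sum_congr rfl fun i _ => ?_
    rw [L.map_smul, smul_eq_mul, mul_comm]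
  refine ⟨isGaussian_of_map_eq_gaussianReal fun L => ⟨0, key L⟩, fun i => ?_⟩
  obtain ⟨v, hv⟩ := key (ContinuousLinearMap.proj i)
  have := integral_map (μ := μ.map B) (φ := ContinuousLinearMap.proj (R := ℝ)
    (φ := fun _ : Fin n => ℝ) i) (f := fun x : ℝ => x) (by fun_prop) (by fun_prop)
  rw [hv, integral_id_gaussianReal] at this
  exact this.symm

lemma sf_lse {Ω : Type*} [MeasurableSpace Ω] (μ : Measure Ω) [IsProbabilityMeasure μ]
    (n : ℕ) (hn : 0 < n) (B₁ B₂ : Ω → Fin n → ℝ)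
    (hmeas₁ : Measurable B₁) (hmeas₂ : Measurable B₂)
    (hgauss₁ : ∀ a : Fin n → ℝ, ∃ v : NNReal,
      Measure.map (fun ω => ∑ i, a i * B₁ ω i) μ = gaussianReal 0 v)
    (hgauss₂ : ∀ a : Fin n → ℝ, ∃ v : NNReal,
      Measure.map (fun ω => ∑ i, a i * B₂ ω i) μ = gaussianReal 0 v)
    (hcomp : ∀ i j : Fin n, i ≠ j →
      ∫ ω, (B₂ ω i - B₂ ω j) ^ 2 ∂μ ≤ ∫ ω, (B₁ ω i - B₁ ω j) ^ 2 ∂μ) :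
    ∫ ω, sfLse (B₂ ω) ∂μ ≤ ∫ ω, sfLse (B₁ ω) ∂μ := by
  obtain ⟨g1, m1⟩ := sf_gauss μ B₁ hmeas₁ hgauss₁
  obtain ⟨g2, m2⟩ := sf_gauss μ B₂ hmeas₂ hgauss₂
  have hlc := sfLse_cont hn
  have := sf_main hn (μ.map B₁) (μ.map B₂) m1 m2 fun i j => by
    rcases eq_or_ne i j with rfl | hij
    · simp
    · rw [integral_map hmeas₁.aemeasurable (Continuous.aestronglyMeasurable (by fun_prop)),
        integral_map hmeas₂.aemeasurable (Continuous.aestronglyMeasurable (by fun_prop))]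
      exact hcomp i j hij
  rwa [integral_map hmeas₁.aemeasurable hlc.aestronglyMeasurable,
    integral_map hmeas₂.aemeasurable hlc.aestronglyMeasurable] at this

theorem stmt_17 {Ω : Type*} [MeasurableSpace Ω] (μ : Measure Ω) [IsProbabilityMeasure μ]
    (n : ℕ) (hn : 0 < n) (B₁ B₂ : Ω → Fin n → ℝ)
    (hmeas₁ : Measurable B₁) (hmeas₂ : Measurable B₂)
    -- centered Gaussian vectors: every linear combination is centered Gaussian
    (hgauss₁ : ∀ a : Fin n → ℝ, ∃ v : NNReal,
      Measure.map (fun ω => ∑ i, a i * B₁ ω i) μ = gaussianReal 0 v)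
    (hgauss₂ : ∀ a : Fin n → ℝ, ∃ v : NNReal,
      Measure.map (fun ω => ∑ i, a i * B₂ ω i) μ = gaussianReal 0 v)
    (hcomp : ∀ i j : Fin n, i ≠ j →
      ∫ ω, (B₂ ω i - B₂ ω j) ^ 2 ∂μ ≤ ∫ ω, (B₁ ω i - B₁ ω j) ^ 2 ∂μ) :
    ∫ ω, (⨆ i : Fin n, B₂ ω i) ∂μ ≤ ∫ ω, (⨆ i : Fin n, B₁ ω i) ∂μ := by
  have : Nonempty (Fin n) := ⟨⟨0, hn⟩⟩
  have hlc := sfLse_cont hn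
  have hintg : ∀ B : Ω → Fin n → ℝ, Measurable B → (∀ a : Fin n → ℝ, ∃ v : NNReal,
      Measure.map (fun ω => ∑ i, a i * B ω i) μ = gaussianReal 0 v) → Integrable B μ := by
    intro B hB hg
    have := (sf_gauss μ B hB hg).1
    have := (IsGaussian.integrable_id (μ := μ.map B))
    exact (integrable_map_measure (by fun_prop) hB.aemeasurable).1 this
  have hsup : ∀ x : Fin n → ℝ, ∀ i, x i ≤ ⨆ i, x i := fun x i =>
    le_ciSup (Set.finite_range x).bddAbove i
  have hsupb : ∀ x : Fin n → ℝ, |⨆ i, x i| ≤ ‖x‖ := by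
    intro x
    rw [abs_le]
    have h0 := fun i => abs_le.1 (norm_le_pi_norm x i)
    exact ⟨(h0 ⟨0, hn⟩).1.trans (hsup x _), ciSup_le fun i => (h0 i).2⟩
  have hsupi : ∀ B : Ω → Fin n → ℝ, Measurable B → Integrable B μ →
      Integrable (fun ω => ⨆ i, B ω i) μ := by
    intro B hB hi
    refine hi.norm.mono' (Measurable.iSup fun i => by fun_prop).aestronglyMeasurable
      (Filter.Eventually.of_forall fun ω => hsupb _)
  have hI1 := hintg B₁ hmeas₁ hgauss₁
  have hI2 := hintg B₂ hmeas₂ hgauss₂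
  have hS1 := hsupi B₁ hmeas₁ hI1
  have hS2 := hsupi B₂ hmeas₂ hI2
  have key : ∀ b : ℝ, 0 < b → ∫ ω, (⨆ i : Fin n, B₂ ω i) ∂μ ≤
      ∫ ω, (⨆ i : Fin n, B₁ ω i) ∂μ + Real.log n / b := by
    intro b hb
    have hlse := sf_lse μ n hn (fun ω => b • B₁ ω) (fun ω => b • B₂ ω) (by fun_prop) (by fun_prop)
      (fun a => by
        obtain ⟨v, hv⟩ := hgauss₁ (fun i => a i * b)
        exact ⟨v, by simpa [mul_assoc] using hv⟩)
      (fun a => by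
        obtain ⟨v, hv⟩ := hgauss₂ (fun i => a i * b)
        exact ⟨v, by simpa [mul_assoc] using hv⟩)
      (fun i j hij => by
        have := mul_le_mul_of_nonneg_left (hcomp i j hij) (sq_nonneg b)
        simpa [← mul_sub, mul_pow, integral_const_mul] using this)
    have hli : ∀ B : Ω → Fin n → ℝ, Measurable B → Integrable B μ →
        Integrable (fun ω => sfLse (b • B ω)) μ := by
      intro B hB hi
      refine ((hi.smul b).norm.add (integrable_const (Real.log n))).mono'
        (hlc.measurable.comp (by fun_prop)).aestronglyMeasurable
        (Filter.Eventually.of_forall fun ω => ?_)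
      exact sfLse_abs hn _
    have a1 : ∫ ω, b * (⨆ i : Fin n, B₂ ω i) ∂μ ≤ ∫ ω, sfLse (b • B₂ ω) ∂μ := by
      refine integral_mono (hS2.const_mul b) (hli B₂ hmeas₂ hI2) fun ω => ?_
      simp only
      rw [Real.mul_iSup_of_nonneg hb.le]
      exact ciSup_le fun i => sfLse_ge (b • B₂ ω) i
    have a2 : ∫ ω, sfLse (b • B₁ ω) ∂μ ≤ ∫ ω, (b * (⨆ i : Fin n, B₁ ω i) + Real.log n) ∂μ := by
      refine integral_mono (hli B₁ hmeas₁ hI1)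
        ((hS1.const_mul b).add (integrable_const _)) fun ω => ?_
      exact sfLse_le hn _ _ fun i => mul_le_mul_of_nonneg_left (hsup _ i) hb.le
    rw [integral_add (hS1.const_mul b) (integrable_const _)] at a2
    simp only [integral_const_mul, integral_const, probReal_univ, one_smul] at a1 a2
    have a3 := a1.trans (hlse.trans a2)
    rw [← mul_le_mul_iff_right₀ hb, mul_add, mul_div_cancel₀ _ hb.ne']
    exact a3
  refine le_of_forall_pos_le_add fun ε hε => ?_
  have hl : 0 ≤ Real.log n := Real.log_natCast_nonneg n
  refine (key ((Real.log n + 1) / ε) (by positivity)).trans ?_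
  gcongr
  rw [div_div_eq_mul_div, div_le_iff₀ (by positivity)]
  nlinarith
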